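/- For every λ > 0 and d ≥ 0, the jump of the 1D transfer function K₁ across the branch cut on the negative real axis is lim_{ε→0⁺} [ K₁(−λ − iε, d) − K₁(−λ + iε, d) ] = i·e^{iπ/4}·cosh(d·e^{iπ/4}·√λ) / √λ. -/

import Mathlib

open Complex Set Filter

/-- Principal branch of the complex square root. -/
noncomputable def csqrt (z : ℂ) : ℂ := z ^ (1/2 : ℂ)

/-- The 1D transfer function `K₁(z,d) = e^{iπ/4} exp(-d e^{-iπ/4} √z)/(2√z)`. -/
noncomputable def K1 (z : ℂ) (d : ℝ) : ℂ :=
  Complex.exp ((Real.pi : ℂ)/4 * Complex.I) *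
    Complex.exp (-(d : ℂ) * Complex.exp (-((Real.pi : ℂ)/4) * Complex.I) * csqrt z) /
      (2 * csqrt z)

/-- for `λ > 0`, `d ≥ 0`, the jump of `K₁` across the branch cut is
`lim_{ε→0⁺} [K₁(-λ-iε,d) - K₁(-λ+iε,d)] = i e^{iπ/4} cosh(d e^{iπ/4} √λ)/√λ`. -/
theorem stmt7 (lam d : ℝ) (hlam : 0 < lam) (hd : 0 ≤ d) :
    Tendsto (fun ε : ℝ =>
        K1 (-(lam : ℂ) - (ε : ℂ) * Complex.I) d - K1 (-(lam : ℂ) + (ε : ℂ) * Complex.I) d)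
      (nhdsWithin 0 (Ioi 0))
      (nhds (Complex.I * Complex.exp ((Real.pi : ℂ)/4 * Complex.I) *
        Complex.cosh ((d : ℂ) * Complex.exp ((Real.pi : ℂ)/4 * Complex.I) *
          (Real.sqrt lam : ℂ)) / (Real.sqrt lam : ℂ))) := by
  have hs : 0 < Real.sqrt lam := Real.sqrt_pos.mpr hlam
  have hs0 : (Real.sqrt lam : ℂ) ≠ 0 := by exact_mod_cast hs.ne'
  have hexp : Complex.exp ((Real.log lam : ℂ) * (1/2)) = (Real.sqrt lam : ℂ) := by
    rw [Real.sqrt_eq_rpow, Real.rpow_def_of_pos hlam]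
    push_cast
    rfl
  have hne : (-(lam : ℂ)) ≠ 0 := by
    simpa using hlam.ne'
  have hnorm : ‖(-(lam : ℂ))‖ = lam := by
    rw [norm_neg, Complex.norm_real, Real.norm_of_nonneg hlam.le]
  have hIhalf : Complex.exp ((Real.pi : ℂ) * I * (1/2)) = I := by
    rw [show (Real.pi : ℂ) * I * (1/2) = (Real.pi : ℂ) / 2 * I by ring]
    exact Complex.exp_pi_div_two_mul_I
  have hIhalf' : Complex.exp (-((Real.pi : ℂ) * I * (1/2))) = -I := by
    rw [Complex.exp_neg, hIhalf, Complex.inv_I]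
  have habove : Tendsto (fun ε : ℝ => csqrt (-(lam : ℂ) + (ε : ℂ) * I))
      (nhdsWithin 0 (Ioi 0)) (nhds (I * (Real.sqrt lam : ℂ))) := by
    have h1 : Tendsto (fun ε : ℝ => -(lam : ℂ) + (ε : ℂ) * I) (nhdsWithin 0 (Ioi 0))
        (nhdsWithin (-(lam : ℂ)) {z : ℂ | 0 ≤ z.im}) := by
      refine tendsto_nhdsWithin_iff.mpr ⟨?_, ?_⟩
      · have : Continuous (fun ε : ℝ => -(lam : ℂ) + (ε : ℂ) * I) := by fun_prop
        simpa using (this.tendsto 0).mono_left nhdsWithin_le_nhds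
      · filter_upwards [self_mem_nhdsWithin] with ε hε
        have : (0:ℝ) < ε := hε
        simpa using this.le
    have h2 := (tendsto_log_nhdsWithin_im_nonneg_of_re_neg_of_im_zero
      (z := -(lam : ℂ)) (by simpa using hlam) (by simp)).comp h1
    have h3 := (h2.mul_const (1/2 : ℂ)).cexp
    rw [hnorm, add_mul, Complex.exp_add, hexp, hIhalf, mul_comm] at h3
    refine h3.congr' ?_
    filter_upwards [self_mem_nhdsWithin] with ε hε
    have hz : -(lam : ℂ) + (ε : ℂ) * I ≠ 0 := by
      intro h
      have := congrArg Complex.im h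
      have h' : (0:ℝ) < ε := hε
      simp at this
      exact h'.ne' this
    simp only [csqrt, Function.comp, Complex.cpow_def_of_ne_zero hz]
  have hbelow : Tendsto (fun ε : ℝ => csqrt (-(lam : ℂ) - (ε : ℂ) * I))
      (nhdsWithin 0 (Ioi 0)) (nhds (-I * (Real.sqrt lam : ℂ))) := by
    have h1 : Tendsto (fun ε : ℝ => -(lam : ℂ) - (ε : ℂ) * I) (nhdsWithin 0 (Ioi 0))
        (nhdsWithin (-(lam : ℂ)) {z : ℂ | z.im < 0}) := by
      refine tendsto_nhdsWithin_iff.mpr ⟨?_, ?_⟩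
      · have : Continuous (fun ε : ℝ => -(lam : ℂ) - (ε : ℂ) * I) := by fun_prop
        simpa using (this.tendsto 0).mono_left nhdsWithin_le_nhds
      · filter_upwards [self_mem_nhdsWithin] with ε hε
        have : (0:ℝ) < ε := hε
        simpa using this
    have h2 := (tendsto_log_nhdsWithin_im_neg_of_re_neg_of_im_zero
      (z := -(lam : ℂ)) (by simpa using hlam) (by simp)).comp h1
    have h3 := (h2.mul_const (1/2 : ℂ)).cexp
    rw [hnorm, sub_mul, sub_eq_add_neg, Complex.exp_add, hexp, hIhalf', mul_comm] at h3
    refine h3.congr' ?_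
    filter_upwards [self_mem_nhdsWithin] with ε hε
    have hz : -(lam : ℂ) - (ε : ℂ) * I ≠ 0 := by
      intro h
      have := congrArg Complex.im h
      have h' : (0:ℝ) < ε := hε
      simp at this
      exact h'.ne' this
    simp only [csqrt, Function.comp, Complex.cpow_def_of_ne_zero hz]
  have key : ∀ (f : ℝ → ℂ) (w : ℂ), w ≠ 0 →
      Tendsto (fun ε => csqrt (f ε)) (nhdsWithin 0 (Ioi 0)) (nhds w) →
      Tendsto (fun ε => K1 (f ε) d) (nhdsWithin 0 (Ioi 0))
        (nhds (Complex.exp ((Real.pi : ℂ)/4 * Complex.I) *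
          Complex.exp (-(d : ℂ) * Complex.exp (-((Real.pi : ℂ)/4) * Complex.I) * w) /
            (2 * w))) := by
    intro f w hw h
    unfold K1
    exact ((h.const_mul _).cexp.const_mul _).div (h.const_mul 2) (mul_ne_zero two_ne_zero hw)
  have hrot : Complex.exp (-((Real.pi : ℂ)/4) * I) * I = Complex.exp ((Real.pi : ℂ)/4 * I) := by
    refine Eq.trans (congrArg (fun t => Complex.exp (-((Real.pi : ℂ)/4) * I) * t) hIhalf.symm) ?_
    show Complex.exp _ * Complex.exp _ = _
    rw [← Complex.exp_add]
    congr 1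
    ring
  have hfin := (key _ _ (mul_ne_zero (neg_ne_zero.mpr I_ne_zero) hs0) hbelow).sub
    (key _ _ (mul_ne_zero I_ne_zero hs0) habove)
  convert hfin using 2
  have e1 : -(d : ℂ) * Complex.exp (-((Real.pi : ℂ)/4) * I) * (-I * (Real.sqrt lam : ℂ))
      = (d : ℂ) * Complex.exp ((Real.pi : ℂ)/4 * I) * (Real.sqrt lam : ℂ) := by
    rw [← hrot]; ring
  have e2 : -(d : ℂ) * Complex.exp (-((Real.pi : ℂ)/4) * I) * (I * (Real.sqrt lam : ℂ))
      = -((d : ℂ) * Complex.exp ((Real.pi : ℂ)/4 * I) * (Real.sqrt lam : ℂ)) := by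
    rw [← hrot]; ring
  rw [e1, e2, Complex.cosh]
  generalize Complex.exp ((d : ℂ) * Complex.exp ((Real.pi : ℂ)/4 * I) * (Real.sqrt lam : ℂ)) = A
  generalize Complex.exp (-((d : ℂ) * Complex.exp ((Real.pi : ℂ)/4 * I) *
    (Real.sqrt lam : ℂ))) = B
  have hI := I_ne_zero
  have hI2 : I ^ 2 = -1 := I_sq
  field_simp
  rw [hI2]
  ring
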